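/- Let 0 < β < |s|. There exists C > 0, depending only on d, s and β, such that for every λ ∈ (0,1] and every measurable φ : ℝ^d → ℝ with |φ| ≤ 1 everywhere and φ(x) = 0 whenever |x|_s > 1, one has ∫∫_{ℝ^d×ℝ^d} |φ^λ(x)| |φ^λ(y)| |x−y|_s^{−β} dx dy ≤ C λ^{−β}. In particular, the function x ↦ |x|_s^{−β} is integrable on {x ∈ ℝ^d : |x|_s ≤ 2} whenever β < |s|. -/

import Mathlib

open MeasureTheory Filter

noncomputable section

def anorm {d : ℕ} (s : Fin d → ℝ) (x : Fin d → ℝ) : ℝ :=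
  ∑ j, |x j| ^ (1 / s j)

def scaled {d : ℕ} (s : Fin d → ℝ) (lam : ℝ) (φ : (Fin d → ℝ) → ℝ) (x : Fin d → ℝ) : ℝ :=
  lam ^ (-(∑ j, s j)) * φ (fun j => x j / lam ^ (s j))

/-- The even function `t ↦ |t| ^ (-γ)`, cut off outside `[-R, R]`. -/
def truncPow (γ R t : ℝ) : ℝ := (Set.Iic R).indicator (fun u => u ^ (-γ)) |t|

lemma truncPow_nonneg (γ R t : ℝ) : 0 ≤ truncPow γ R t :=
  Set.indicator_apply_nonneg fun _ => Real.rpow_nonneg (abs_nonneg t) _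

lemma truncPow_of_abs_le {γ R t : ℝ} (h : |t| ≤ R) : truncPow γ R t = |t| ^ (-γ) :=
  Set.indicator_of_mem (s := Set.Iic R) h _

lemma integral_truncPow {γ R : ℝ} (hγ : γ < 1) (hR : 0 < R) :
    ∫ t, truncPow γ R t = 2 * (R ^ (1 - γ) / (1 - γ)) := by
  unfold truncPow
  rw [integral_comp_abs, setIntegral_indicator measurableSet_Iic, Set.Ioi_inter_Iic,
    ← intervalIntegral.integral_of_le hR.le, integral_rpow (Or.inl (by linarith)),
    neg_add_eq_sub, Real.zero_rpow (by linarith), sub_zero]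

lemma integrable_truncPow {γ R : ℝ} (hγ : γ < 1) (hR : 0 < R) : Integrable (truncPow γ R) := by
  by_contra h
  have h_eq := integral_truncPow hγ hR
  rw [integral_undef h] at h_eq
  have : 0 < 1 - γ := by linarith
  have : 0 < 2 * (R ^ (1 - γ) / (1 - γ)) := by positivity
  linarith

section Anorm

variable {d : ℕ} {s : Fin d → ℝ}

lemma anorm_nonneg (s x : Fin d → ℝ) : 0 ≤ anorm s x :=
  Finset.sum_nonneg fun _ _ => Real.rpow_nonneg (abs_nonneg _) _

lemma abs_rpow_le_anorm (s x : Fin d → ℝ) (j : Fin d) : |x j| ^ (1 / s j) ≤ anorm s x :=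
  Finset.single_le_sum (f := fun j => |x j| ^ (1 / s j))
    (fun _ _ => Real.rpow_nonneg (abs_nonneg _) _) (Finset.mem_univ j)

lemma abs_le_of_anorm_le (hs : ∀ j, 1 ≤ s j) {x : Fin d → ℝ} {r : ℝ} (h : anorm s x ≤ r)
    (j : Fin d) : |x j| ≤ r ^ s j := by
  have h_coord := (abs_rpow_le_anorm s x j).trans h
  rw [one_div] at h_coord
  exact (Real.rpow_inv_le_iff_of_pos (abs_nonneg _) ((anorm_nonneg s x).trans h)
    (by linarith [hs j])).1 h_coord

lemma measurable_anorm (s : Fin d → ℝ) : Measurable (anorm s) := by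
  unfold anorm
  fun_prop

/-- Away from the coordinate hyperplanes, a negative power of the anisotropic norm is dominated by
a product of one-dimensional powers. -/
lemma anorm_rpow_neg_le (hs : ∀ j, 1 ≤ s j) {β : ℝ} (hβ : 0 < β) (hβs : β < ∑ j, s j)
    {x : Fin d → ℝ} (hx : ∀ j, x j ≠ 0) :
    anorm s x ^ (-β) ≤ ∏ j, |x j| ^ (-(β / ∑ j, s j)) := by
  have hS : 0 < ∑ j, s j := hβ.trans hβs
  have hne : (Finset.univ : Finset (Fin d)).Nonempty := by
    by_contra h
    rw [Finset.not_nonempty_iff_eq_empty.1 h, Finset.sum_empty] at hS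
    exact lt_irrefl _ hS
  obtain ⟨i, -⟩ := hne
  have hpos : 0 < anorm s x :=
    (Real.rpow_pos_of_pos (abs_pos.2 (hx i)) _).trans_le (abs_rpow_le_anorm s x i)
  have h_exp : -β = ∑ j, s j * -(β / ∑ j, s j) := by
    rw [← Finset.sum_mul]
    field_simp
  rw [h_exp, Real.rpow_sum_of_pos hpos]
  refine Finset.prod_le_prod (fun _ _ => Real.rpow_nonneg hpos.le _) fun j _ => ?_
  rw [Real.rpow_mul hpos.le]
  exact Real.rpow_le_rpow_of_nonpos (abs_pos.2 (hx j)) (abs_le_of_anorm_le hs le_rfl j)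
    (neg_nonpos.2 (by positivity))

lemma abs_le_of_scaled_ne_zero (hs : ∀ j, 1 ≤ s j) {lam : ℝ} (hlam : 0 < lam)
    {φ : (Fin d → ℝ) → ℝ} (hφ : ∀ x, 1 < anorm s x → φ x = 0) {x : Fin d → ℝ}
    (hx : scaled s lam φ x ≠ 0) (j : Fin d) : |x j| ≤ lam ^ s j := by
  have h_le : anorm s (fun j => x j / lam ^ s j) ≤ 1 :=
    not_lt.1 fun h => hx (by rw [scaled, hφ _ h, mul_zero])
  have hpos : 0 < lam ^ s j := Real.rpow_pos_of_pos hlam _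
  simpa [abs_div, abs_of_pos hpos, div_le_one hpos] using abs_le_of_anorm_le hs h_le j

lemma abs_scaled_le {lam : ℝ} (hlam : 0 < lam) {φ : (Fin d → ℝ) → ℝ} (hφ : ∀ x, |φ x| ≤ 1)
    (x : Fin d → ℝ) : |scaled s lam φ x| ≤ lam ^ (-∑ j, s j) := by
  have hpos : 0 < lam ^ (-∑ j, s j) := Real.rpow_pos_of_pos hlam _
  rw [scaled, abs_mul, abs_of_pos hpos]
  exact mul_le_of_le_one_right hpos.le (hφ _)

lemma scaled_mul_scaled_mul_anorm_le (hs : ∀ j, 1 ≤ s j) {β : ℝ} (hβ : 0 < β)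
    (hβs : β < ∑ j, s j) {lam : ℝ} (hlam : 0 < lam) {φ : (Fin d → ℝ) → ℝ}
    (hφ : ∀ x, |φ x| ≤ 1) (hφs : ∀ x, 1 < anorm s x → φ x = 0) {x y : Fin d → ℝ}
    (hxy : ∀ j, y j ≠ x j) :
    |scaled s lam φ x| * |scaled s lam φ y| * anorm s (x - y) ^ (-β) ≤
      lam ^ (-∑ j, s j) * lam ^ (-∑ j, s j) * (∏ j, truncPow 0 (lam ^ s j) (x j)) *
        ∏ j, truncPow (β / ∑ j, s j) (2 * lam ^ s j) (x j - y j) := by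
  have h_lam : 0 ≤ lam ^ (-∑ j, s j) := Real.rpow_nonneg hlam.le _
  have h_nonneg : 0 ≤ lam ^ (-∑ j, s j) * lam ^ (-∑ j, s j) *
      (∏ j, truncPow 0 (lam ^ s j) (x j)) *
        ∏ j, truncPow (β / ∑ j, s j) (2 * lam ^ s j) (x j - y j) :=
    mul_nonneg (mul_nonneg (mul_nonneg h_lam h_lam)
      (Finset.prod_nonneg fun _ _ => truncPow_nonneg _ _ _))
      (Finset.prod_nonneg fun _ _ => truncPow_nonneg _ _ _)
  by_cases hx : scaled s lam φ x = 0
  · simpa [hx] using h_nonneg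
  by_cases hy : scaled s lam φ y = 0
  · simpa [hy] using h_nonneg
  have hxj := abs_le_of_scaled_ne_zero hs hlam hφs hx
  have hyj := abs_le_of_scaled_ne_zero hs hlam hφs hy
  have h_one : ∏ j, truncPow 0 (lam ^ s j) (x j) = 1 :=
    Finset.prod_eq_one fun j _ => by rw [truncPow_of_abs_le (hxj j), neg_zero, Real.rpow_zero]
  have h_prod : ∏ j, truncPow (β / ∑ j, s j) (2 * lam ^ s j) (x j - y j) =
      ∏ j, |(x - y) j| ^ (-(β / ∑ j, s j)) :=
    Finset.prod_congr rfl fun j _ =>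
      truncPow_of_abs_le ((abs_sub _ _).trans (by linarith [hxj j, hyj j]))
  rw [h_one, mul_one, h_prod]
  exact mul_le_mul
    (mul_le_mul (abs_scaled_le hlam hφ x) (abs_scaled_le hlam hφ y) (abs_nonneg _) h_lam)
    (anorm_rpow_neg_le hs hβ hβs fun j => sub_ne_zero.2 (hxy j).symm)
    (Real.rpow_nonneg (anorm_nonneg _ _) _) (mul_nonneg h_lam h_lam)

lemma ae_forall_apply_ne (x : Fin d → ℝ) : ∀ᵐ y : Fin d → ℝ, ∀ j, y j ≠ x j :=
  ae_all_iff.2 fun j => Measure.ae_eval_ne (fun _ : Fin d => (volume : Measure ℝ)) j (x j)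

lemma integrableOn_anorm_rpow_neg (hs : ∀ j, 1 ≤ s j) {β : ℝ} (hβ : 0 < β)
    (hβs : β < ∑ j, s j) {r : ℝ} (hr : 0 < r) :
    IntegrableOn (fun x : Fin d → ℝ => anorm s x ^ (-β)) {x | anorm s x ≤ r} := by
  have hγ : β / ∑ j, s j < 1 := (div_lt_one (hβ.trans hβs)).2 hβs
  have h_int : Integrable fun x : Fin d → ℝ => ∏ j, truncPow (β / ∑ j, s j) (r ^ s j) (x j) :=
    Integrable.fintype_prod fun j => integrable_truncPow hγ (Real.rpow_pos_of_pos hr _)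
  refine h_int.integrableOn.mono' ((measurable_anorm s).pow_const _).aestronglyMeasurable ?_
  refine (ae_restrict_iff' (measurableSet_le (measurable_anorm s) measurable_const)).2 ?_
  filter_upwards [ae_forall_apply_ne (0 : Fin d → ℝ)] with x hx hxr
  rw [Real.norm_of_nonneg (Real.rpow_nonneg (anorm_nonneg _ _) _)]
  refine (anorm_rpow_neg_le hs hβ hβs hx).trans_eq (Finset.prod_congr rfl fun j _ => ?_)
  rw [truncPow_of_abs_le (abs_le_of_anorm_le hs hxr j)]

lemma integral_scaled_mul_scaled_mul_anorm_le (hs : ∀ j, 1 ≤ s j) {β : ℝ} (hβ : 0 < β)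
    (hβs : β < ∑ j, s j) {lam : ℝ} (hlam : 0 < lam) {φ : (Fin d → ℝ) → ℝ}
    (hφ : ∀ x, |φ x| ≤ 1) (hφs : ∀ x, 1 < anorm s x → φ x = 0) :
    ∫ x : Fin d → ℝ, ∫ y : Fin d → ℝ,
        |scaled s lam φ x| * |scaled s lam φ y| * anorm s (x - y) ^ (-β) ≤
      lam ^ (-∑ j, s j) * lam ^ (-∑ j, s j) * (∏ j, 2 * lam ^ s j) *
        ∏ j, 2 * ((2 * lam ^ s j) ^ (1 - β / ∑ j, s j) / (1 - β / ∑ j, s j)) := by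
  have hγ : β / ∑ j, s j < 1 := (div_lt_one (hβ.trans hβs)).2 hβs
  have h_pos (j : Fin d) : 0 < lam ^ s j := Real.rpow_pos_of_pos hlam _
  have h_pos2 (j : Fin d) : 0 < 2 * lam ^ s j := mul_pos two_pos (h_pos j)
  have h_nonneg (x y : Fin d → ℝ) :
      0 ≤ |scaled s lam φ x| * |scaled s lam φ y| * anorm s (x - y) ^ (-β) :=
    mul_nonneg (by positivity) (Real.rpow_nonneg (anorm_nonneg _ _) _)
  have h_inner (x : Fin d → ℝ) :
      ∫ y : Fin d → ℝ, |scaled s lam φ x| * |scaled s lam φ y| * anorm s (x - y) ^ (-β) ≤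
        lam ^ (-∑ j, s j) * lam ^ (-∑ j, s j) * (∏ j, truncPow 0 (lam ^ s j) (x j)) *
          ∏ j, 2 * ((2 * lam ^ s j) ^ (1 - β / ∑ j, s j) / (1 - β / ∑ j, s j)) := by
    have h_int : Integrable fun y : Fin d → ℝ =>
        ∏ j, truncPow (β / ∑ j, s j) (2 * lam ^ s j) (x j - y j) :=
      Integrable.fintype_prod fun j => (integrable_truncPow hγ (h_pos2 j)).comp_sub_left (x j)
    refine (integral_mono_of_nonneg (Eventually.of_forall (h_nonneg x)) (h_int.const_mul _)
      ((ae_forall_apply_ne x).mono fun y hy =>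
        scaled_mul_scaled_mul_anorm_le hs hβ hβs hlam hφ hφs hy)).trans_eq ?_
    rw [integral_const_mul, integral_fintype_prod_volume_eq_prod
      (fun j t => truncPow (β / ∑ j, s j) (2 * lam ^ s j) (x j - t))]
    congr 1
    refine Finset.prod_congr rfl fun j _ => ?_
    rw [integral_sub_left_eq_self (truncPow (β / ∑ j, s j) (2 * lam ^ s j)),
      integral_truncPow hγ (h_pos2 j)]
  have h_int : Integrable fun x : Fin d → ℝ => ∏ j, truncPow 0 (lam ^ s j) (x j) :=
    Integrable.fintype_prod fun j => integrable_truncPow zero_lt_one (h_pos j)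
  refine (integral_mono_of_nonneg
    (Eventually.of_forall fun x => integral_nonneg (h_nonneg x))
    ((h_int.const_mul _).mul_const _) (Eventually.of_forall h_inner)).trans_eq ?_
  rw [integral_mul_const, integral_const_mul, integral_fintype_prod_volume_eq_prod
    (fun j => truncPow 0 (lam ^ s j))]
  simp only [integral_truncPow zero_lt_one (h_pos _), sub_zero, Real.rpow_one, div_one]

lemma scaling_constant_eq {β : ℝ} (hβ : 0 < β) (hβs : β < ∑ j, s j) {lam : ℝ} (hlam : 0 < lam) :
    lam ^ (-∑ j, s j) * lam ^ (-∑ j, s j) * (∏ j, 2 * lam ^ s j) *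
        ∏ j, 2 * ((2 * lam ^ s j) ^ (1 - β / ∑ j, s j) / (1 - β / ∑ j, s j)) =
      (∏ _j : Fin d, 4 * (2 ^ (1 - β / ∑ j, s j) / (1 - β / ∑ j, s j))) * lam ^ (-β) := by
  have hS : 0 < ∑ j, s j := hβ.trans hβs
  have h_exp : -β = -∑ j, s j + -∑ j, s j + ∑ j, s j + (∑ j, s j) * (1 - β / ∑ j, s j) := by
    field_simp
    ring
  have h_factor (j : Fin d) :
      2 * lam ^ s j * (2 * ((2 * lam ^ s j) ^ (1 - β / ∑ j, s j) / (1 - β / ∑ j, s j))) =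
      4 * (2 ^ (1 - β / ∑ j, s j) / (1 - β / ∑ j, s j)) *
        (lam ^ s j * lam ^ (s j * (1 - β / ∑ j, s j))) := by
    rw [Real.mul_rpow two_pos.le (Real.rpow_nonneg hlam.le _), ← Real.rpow_mul hlam.le]
    ring
  generalize 4 * (2 ^ (1 - β / ∑ j, s j) / (1 - β / ∑ j, s j)) = K at h_factor ⊢
  rw [mul_assoc, ← Finset.prod_mul_distrib, Finset.prod_congr rfl fun j _ => h_factor j,
    Finset.prod_mul_distrib, Finset.prod_mul_distrib, ← Real.rpow_sum_of_pos hlam,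
    ← Real.rpow_sum_of_pos hlam, ← Finset.sum_mul, h_exp, Real.rpow_add hlam, Real.rpow_add hlam,
    Real.rpow_add hlam]
  ring

end Anorm

/-- the anisotropic singular-integral bound
`∫∫ |φ^λ(x)| |φ^λ(y)| |x−y|ₛ^{−β} dx dy ≤ C λ^{−β}` for `0 < β < |s|`, and the resulting
local integrability of `x ↦ |x|ₛ^{−β}`. -/
theorem stmt12 (d : ℕ) (hd : 1 ≤ d) (s : Fin d → ℝ) (hs : ∀ j, 1 ≤ s j)
    (β : ℝ) (hβ0 : 0 < β) (hβ : β < ∑ j, s j) :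
    (∃ C > 0, ∀ lam ∈ Set.Ioc (0:ℝ) 1, ∀ φ : (Fin d → ℝ) → ℝ, Measurable φ →
      (∀ x, |φ x| ≤ 1) → (∀ x, 1 < anorm s x → φ x = 0) →
      (∫ x : Fin d → ℝ, ∫ y : Fin d → ℝ,
          |scaled s lam φ x| * |scaled s lam φ y| * anorm s (x - y) ^ (-β)) ≤ C * lam ^ (-β))
    ∧ IntegrableOn (fun x : Fin d → ℝ => anorm s x ^ (-β)) {x | anorm s x ≤ 2} := by
  refine ⟨⟨∏ _j : Fin d, 4 * (2 ^ (1 - β / ∑ j, s j) / (1 - β / ∑ j, s j)), ?_, ?_⟩,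
    integrableOn_anorm_rpow_neg hs hβ0 hβ two_pos⟩
  · have : 0 < 1 - β / ∑ j, s j := sub_pos.2 ((div_lt_one (hβ0.trans hβ)).2 hβ)
    exact Finset.prod_pos fun _ _ => by positivity
  · intro lam hlam φ _ hφ hφs
    exact (integral_scaled_mul_scaled_mul_anorm_le hs hβ0 hβ hlam.1 hφ hφs).trans_eq
      (scaling_constant_eq hβ0 hβ hlam.1)
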